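/- Let A be a parity automaton with costs over Σ_I × Σ_O with n states and k colors, where Ω(Q) contains both an even and an odd color, let d = 2^{2n⁴k²}, and fix for each type t realized by some run of A a representative run ρ_t of type t. Then Player O wins the abstract game G(A) if, and only if, Player O wins the delay game Γ_f(L(A)) for some delay function f. -/

import Mathlib

attribute [local instance] Classical.propDecidable

noncomputable section

/-- A parity automaton with costs `(Q, A, qI, δ, Ω, Cst)`.
`Cst q a = true` means that the transition `(q, a, δ q a)` is an increment-transition,
`Cst q a = false` means it is an `ε`-transition. -/
structure PACost (Q : Type) (A : Type) where
  qI : Q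
  δ : Q → A → Q
  Ω : Q → ℕ
  Cst : Q → A → Bool

namespace PACost

variable {Q A : Type}

/-- The state reached after processing the first `n` letters of `w` starting in `q0`. -/
def stateAt (M : PACost Q A) (q0 : Q) (w : ℕ → A) : ℕ → Q
  | 0 => q0
  | n + 1 => M.δ (stateAt M q0 w n) (w n)

/-- The cost (number of increment-transitions) of the run infix between positions `m` and `n`. -/
def segCost (M : PACost Q A) (q0 : Q) (w : ℕ → A) (m n : ℕ) : ℕ :=
  ((Finset.Ico m n).filter fun j => M.Cst (stateAt M q0 w j) (w j) = true).card

/-- `Ans c`: the set of even colors of `M` that are larger than `c`. -/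
def Ans (M : PACost Q A) (c : ℕ) : Set ℕ :=
  { c' | (∃ q, M.Ω q = c') ∧ c < c' ∧ Even c' }

/-- The cost-of-response at position `n` of the run of `M` on `w` starting in `q0`. -/
def Cor (M : PACost Q A) (q0 : Q) (w : ℕ → A) (n : ℕ) : ℕ∞ :=
  if Even (M.Ω (stateAt M q0 w n)) then 0
  else
    sInf { c : ℕ∞ | ∃ n', n < n' ∧
      M.Ω (stateAt M q0 w n') ∈ M.Ans (M.Ω (stateAt M q0 w n)) ∧
      c = (segCost M q0 w n n' : ℕ∞) }

/-- The run of `M` on `w` starting in `q0` satisfies the parity condition with costs. -/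
def Accepting (M : PACost Q A) (q0 : Q) (w : ℕ → A) : Prop :=
  Filter.limsup (fun n => Cor M q0 w n) Filter.atTop < ⊤

/-- The language of `M`. -/
def Lang (M : PACost Q A) : Set (ℕ → A) := { w | Accepting M M.qI w }

/-- `M` is a finitary Büchi automaton: every transition is an increment-transition and
all colors are `1` or `2`. -/
def FinBuchi (M : PACost Q A) : Prop :=
  (∀ q a, M.Cst q a = true) ∧ ∀ q, M.Ω q = 1 ∨ M.Ω q = 2

end PACost

/-- The finite segment `w m, w (m+1), …, w (n-1)` of an infinite word `w`. -/
def seg {A : Type} (w : ℕ → A) (m n : ℕ) : List A :=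
  (List.range (n - m)).map fun i => w (m + i)

namespace PACost

/-- Types of runs: `(first state, last state, max even color, max unanswered odd color,
increment occurred)`. -/
abbrev RType (Q : Type) := Q × Q × WithBot ℕ × WithBot ℕ × Bool

variable {Q A : Type}

/-- The type of the non-empty finite run of `M` starting in `q` processing `l`. -/
def runType (M : PACost Q A) (q : Q) (l : List A) : RType Q :=
  let sts := List.scanl M.δ q l
  let st : ℕ → Q := fun j => sts.getD j q
  ( q,
    l.foldl M.δ q,
    ((Finset.range sts.length).filter fun j => Even (M.Ω (st j))).sup
      (fun j => (M.Ω (st j) : WithBot ℕ)),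
    ((Finset.range sts.length).filter fun j =>
        Odd (M.Ω (st j)) ∧ ∀ j' < sts.length, j < j' →
          ¬(Even (M.Ω (st j')) ∧ M.Ω (st j) < M.Ω (st j'))).sup
      (fun j => (M.Ω (st j) : WithBot ℕ)),
    (sts.zip l).any fun p => M.Cst p.1 p.2 )

/-- The type of the empty run prefix starting in `q`. -/
def InitT (M : PACost Q A) (q : Q) : RType Q :=
  ( q, q,
    if Even (M.Ω q) then (M.Ω q : WithBot ℕ) else ⊥,
    if Odd (M.Ω q) then (M.Ω q : WithBot ℕ) else ⊥,
    false )

/-- The type-update function. -/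
def UpdT (M : PACost Q A) (t : RType Q) (a : A) : RType Q :=
  match t with
  | (q0, q1, c0, c1, ℓ) =>
    let q1' := M.δ q1 a
    ( q0, q1',
      if Even (M.Ω q1') then max c0 ((M.Ω q1' : WithBot ℕ)) else c0,
      if Odd (M.Ω q1') then max c1 ((M.Ω q1' : WithBot ℕ))
      else if ∃ c : ℕ, c1 = (c : WithBot ℕ) ∧ M.Ω q1' ∈ M.Ans c then ⊥
      else c1,
      ℓ || M.Cst q1 a )

end PACost

section DelayGames

variable {I O : Type}

/-- The `n`-th letter of the concatenation `u 0 ++ u 1 ++ u 2 ++ ⋯`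
(well-defined whenever all blocks are non-empty). -/
def flatWord [Inhabited I] (u : ℕ → List I) (n : ℕ) : I :=
  (((List.range (n + 1)).map u).flatten).getD n default

/-- A delay function maps every round to a positive number of letters. -/
def DelayFn (f : ℕ → ℕ) : Prop := ∀ i, 0 < f i

/-- The constant delay function `f_k` with `f_k 0 = k + 1` and `f_k i = 1` for `i > 0`. -/
def constDF (k : ℕ) : ℕ → ℕ := fun i => if i = 0 then k + 1 else 1

/-- The sequence of letters Player I has produced up to (and including) round `i`. -/
def oHist (u : ℕ → List I) (i : ℕ) : List I := ((List.range (i + 1)).map u).flatten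

/-- `τO` is a winning strategy for Player O in the delay game with delay function `f`
and winning condition `L`. -/
def OWinning [Inhabited I] (f : ℕ → ℕ) (L : Set (ℕ → I × O)) (τO : List I → O) : Prop :=
  ∀ u : ℕ → List I, ∀ v : ℕ → O,
    (∀ i, (u i).length = f i) →
    (∀ i, v i = τO (oHist u i)) →
    (fun n => (flatWord u n, v n)) ∈ L

/-- Player O wins the delay game `Γ_f(L)`. -/
def OWins [Inhabited I] (f : ℕ → ℕ) (L : Set (ℕ → I × O)) : Prop :=
  ∃ τO : List I → O, OWinning f L τO

/-- `τI` is a winning strategy for Player I in the delay game with delay function `f`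
and winning condition `L`. -/
def IWinning [Inhabited I] (f : ℕ → ℕ) (L : Set (ℕ → I × O)) (τI : List O → List I) : Prop :=
  (∀ w, (τI w).length = f w.length) ∧
  ∀ u : ℕ → List I, ∀ v : ℕ → O,
    (∀ i, u i = τI ((List.range i).map v)) →
    (fun n => (flatWord u n, v n)) ∉ L

/-- Player I wins the delay game `Γ_f(L)`. -/
def IWins [Inhabited I] (f : ℕ → ℕ) (L : Set (ℕ → I × O)) : Prop :=
  ∃ τI : List O → List I, IWinning f L τI

/-- The cost of a strategy `τO` of Player O: the supremum of the word-costs `wc` of the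
outcomes of plays consistent with `τO`. -/
def stratCost [Inhabited I] (wc : (ℕ → I × O) → ℕ∞) (f : ℕ → ℕ) (τO : List I → O) : ℕ∞ :=
  ⨆ (u : ℕ → List I) (v : ℕ → O)
    (_ : (∀ i, (u i).length = f i) ∧ ∀ i, v i = τO (oHist u i)),
    wc (fun n => (flatWord u n, v n))

/-- An optimal winning strategy for Player O in `Γ_f(L)` exists and has cost `c`. -/
def OptimalCostIs [Inhabited I] (L : Set (ℕ → I × O)) (wc : (ℕ → I × O) → ℕ∞)
    (f : ℕ → ℕ) (c : ℕ∞) : Prop :=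
  (∃ τO, OWinning f L τO ∧ stratCost wc f τO = c) ∧
  ∀ τO, OWinning f L τO → c ≤ stratCost wc f τO

end DelayGames

namespace PACost

variable {Q I O : Type}

/-- One step of the powerset transition function obtained from `M` by tracking types and
projecting away the `O`-component of the alphabet. -/
def dP (M : PACost Q (I × O)) (S : Set (Q × RType Q)) (a : I) : Set (Q × RType Q) :=
  { x | ∃ qt ∈ S, ∃ b : O, x = (M.δ qt.1 (a, b), UpdT M qt.2 (a, b)) }

/-- The extension `δ_P^+` of the powerset transition function to words
(with `dPPlus M S [] = S`). -/
def dPPlus (M : PACost Q (I × O)) (S : Set (Q × RType Q)) (l : List I) : Set (Q × RType Q) :=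
  l.foldl (dP M) S

/-- The function `r_x` associated with the word `x`. -/
def rfun (M : PACost Q (I × O)) (x : List I) : Q → Set (Q × RType Q) :=
  fun q => dPPlus M {(q, InitT M q)} x

/-- The set `T_A` of types of `M`: tuples whose color entries are colors of `M` or `⊥`. -/
def TypeSet (M : PACost Q (I × O)) : Set (RType Q) :=
  { t | (t.2.2.1 = ⊥ ∨ ∃ q, (M.Ω q : WithBot ℕ) = t.2.2.1) ∧
        (t.2.2.2.1 = ⊥ ∨ ∃ q, (M.Ω q : WithBot ℕ) = t.2.2.2.1) }

/-- The set `ℛ` of equivalence classes of `≡_A` on words of length `2d`, where each class is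
represented by its (class-independent) function `r_S : Q → 2^{Q'}`. -/
def Rcls (M : PACost Q (I × O)) (d : ℕ) : Set (Q → Set (Q × RType Q)) :=
  { r | ∃ x : List I, x.length = 2 * d ∧ r = rfun M x }

end PACost

namespace PACost

variable {Q I O : Type}

/-- The history of the play in the abstract game `𝒢(A)` in which Player I's moves are given
by `S` and Player O moves according to the strategy `σ` (her move in round `0` is forced). -/
def gHist (M : PACost Q (I × O))
    (σ : List ((Q → Set (Q × RType Q)) × (Q × RType Q)) → (Q → Set (Q × RType Q)) → Q × RType Q)
    (S : ℕ → Q → Set (Q × RType Q)) : ℕ → List ((Q → Set (Q × RType Q)) × (Q × RType Q))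
  | 0 => [(S 0, (M.qI, InitT M M.qI))]
  | i + 1 => gHist M σ S i ++ [(S (i + 1), σ (gHist M σ S i) (S (i + 1)))]

/-- The pair `(q_i, t_i)` picked by Player O in round `i` of the abstract game. -/
def gQT (M : PACost Q (I × O))
    (σ : List ((Q → Set (Q × RType Q)) × (Q × RType Q)) → (Q → Set (Q × RType Q)) → Q × RType Q)
    (S : ℕ → Q → Set (Q × RType Q)) (i : ℕ) : Q × RType Q :=
  ((gHist M σ S i).getLastD (S 0, (M.qI, InitT M M.qI))).2

/-- Player O wins the abstract game `𝒢(A)` (with parameter `d` and fixed representative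
runs `rep t` for the realized types `t`): she has a strategy such that against every sequence
of classes played by Player I, all her moves are legal and the concatenation
`ρ_{t_1} ρ_{t_2} ρ_{t_3} ⋯` of representative runs is accepting. -/
def GWinsO [Inhabited I] [Inhabited O] (M : PACost Q (I × O)) (d : ℕ)
    (rep : RType Q → Q × List (I × O)) : Prop :=
  ∃ σ, ∀ S : ℕ → Q → Set (Q × RType Q), (∀ i, S i ∈ Rcls M d) →
    (∀ i, gQT M σ S (i + 1) ∈ S i (gQT M σ S i).1) ∧
    Accepting M (rep (gQT M σ S 1).2).1
      (flatWord fun j => (rep (gQT M σ S (j + 1)).2).2)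

end PACost

/-!
A winning strategy in a delay game is a map from input words to output words with finite lookahead,
and the delay functions only say how large that lookahead is. The abstract game asks for the same
kind of map, with lookahead one, on sequences of equivalence classes of input blocks.

Two facts connect the games. First, if two runs are cut into blocks of pairwise equal types, then an
unanswered request in a block of one run is matched by one at least as high in the corresponding
block of the other, and a block contains an increment iff the corresponding one does. As long as the
blocks of one run have bounded length, its costs-of-response are therefore bounded in terms of
those of the other run, so acceptance carries over. In particular, acceptance passes between a run
and the concatenation of the representatives of the types of its blocks: the representatives have
bounded length because there are finitely many types, and the blocks of a run that Player O has to
build in the delay game all have length `2 * d`.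

Second, a class of words of length `2 * d` contains arbitrarily long words: `rfun x` is
determined by a set of types, so it repeats along the prefixes of `x`, and the loop can be pumped.
Player I's classes can thus be replaced by blocks long enough for one additional class to cover the
lookahead of a given delay strategy.
-/

section Words

variable {A B : Type}

@[simp]
theorem length_seg (w : ℕ → A) (m n : ℕ) : (seg w m n).length = n - m := by simp [seg]

@[simp]
theorem getElem_seg (w : ℕ → A) (m n i : ℕ) (h : i < (seg w m n).length) :
    (seg w m n)[i] = w (m + i) := by simp [seg]

theorem seg_self (w : ℕ → A) (m : ℕ) : seg w m m = [] := by simp [seg]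

theorem seg_append_seg (w : ℕ → A) {a b c : ℕ} (hab : a ≤ b) (hbc : b ≤ c) :
    seg w a b ++ seg w b c = seg w a c := by
  refine List.ext_getElem (by simp; omega) fun i _ _ => ?_
  simp only [List.getElem_append, length_seg, getElem_seg]
  split_ifs
  · rfl
  · congr 1; omega

theorem seg_succ (w : ℕ → A) {m n : ℕ} (h : m ≤ n) : seg w m (n + 1) = seg w m n ++ [w n] := by
  simp [seg, Nat.succ_sub h, List.range_succ, Nat.add_sub_cancel' h]

theorem seg_congr {w w' : ℕ → A} {m n : ℕ} (h : ∀ j, m ≤ j → j < n → w j = w' j) :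
    seg w m n = seg w' m n :=
  List.ext_getElem (by simp) fun i hi _ => by
    simpa using h (m + i) (by omega) (by rw [length_seg] at hi; omega)

theorem seg_ne_nil (w : ℕ → A) {m n : ℕ} (h : m < n) : seg w m n ≠ [] :=
  List.ne_nil_of_length_pos (by rw [length_seg]; omega)

theorem zip_seg (v : ℕ → A) (w : ℕ → B) (m n : ℕ) :
    (seg v m n).zip (seg w m n) = seg (fun i => (v i, w i)) m n :=
  List.ext_getElem (by simp) fun i _ _ => by simp

theorem exists_seg_eq [Nonempty A] (l : List A) : ∃ w : ℕ → A, seg w 0 l.length = l :=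
  ⟨fun i => l.getD i (Classical.arbitrary A),
    List.ext_getElem (by simp) fun i _ hi => by simp [hi]⟩

theorem flatten_map_seg (w : ℕ → A) {p : ℕ → ℕ} (hp : Monotone p) (n : ℕ) :
    ((List.range n).map fun i => seg w (p i) (p (i + 1))).flatten = seg w (p 0) (p n) := by
  induction n with
  | zero => simp [seg_self]
  | succ n ih =>
    rw [List.range_succ, List.map_append, List.flatten_append, ih, List.map_singleton,
      List.flatten_singleton, seg_append_seg w (hp n.zero_le) (hp n.le_succ)]

/-- The position at which the block `u i` starts in the concatenation `u 0 ++ u 1 ++ ⋯`. -/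
def blockStart (u : ℕ → List A) (i : ℕ) : ℕ := ∑ l ∈ Finset.range i, (u l).length

@[simp]
theorem blockStart_zero (u : ℕ → List A) : blockStart u 0 = 0 := Finset.sum_range_zero _

theorem blockStart_succ (u : ℕ → List A) (i : ℕ) :
    blockStart u (i + 1) = blockStart u i + (u i).length := Finset.sum_range_succ _ _

theorem blockStart_strictMono {u : ℕ → List A} (hu : ∀ i, u i ≠ []) : StrictMono (blockStart u) :=
  strictMono_nat_of_lt_succ fun i => by
    have := List.length_pos_of_ne_nil (hu i)
    rw [blockStart_succ]
    omega

theorem length_flatten_map_range (u : ℕ → List A) (m : ℕ) :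
    ((List.range m).map u).flatten.length = blockStart u m := by
  induction m with
  | zero => simp
  | succ m ih => simp [List.range_succ, blockStart_succ, ih]

theorem flatten_map_range_isPrefix (u : ℕ → List A) {m n : ℕ} (h : m ≤ n) :
    ((List.range m).map u).flatten <+: ((List.range n).map u).flatten := by
  obtain ⟨k, rfl⟩ := Nat.exists_eq_add_of_le h
  rw [List.range_add, List.map_append, List.flatten_append]
  exact List.prefix_append _ _

section FlatWord

variable [Inhabited A]

theorem flatWord_eq_getElem {u : ℕ → List A} (hu : ∀ i, u i ≠ []) {m n : ℕ}
    (h : n < ((List.range m).map u).flatten.length) :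
    flatWord u n = ((List.range m).map u).flatten[n] := by
  have hn : n < ((List.range (n + 1)).map u).flatten.length := by
    rw [length_flatten_map_range]
    exact (blockStart_strictMono hu).le_apply
  rw [flatWord, List.getD_eq_getElem _ _ hn]
  rcases le_total m (n + 1) with hm | hm
  · exact ((flatten_map_range_isPrefix u hm).getElem h).symm
  · exact (flatten_map_range_isPrefix u hm).getElem hn

theorem seg_zero_flatWord {u : ℕ → List A} (hu : ∀ i, u i ≠ []) (m : ℕ) :
    seg (flatWord u) 0 (blockStart u m) = ((List.range m).map u).flatten :=
  List.ext_getElem (by rw [length_seg, length_flatten_map_range, Nat.sub_zero]) fun i _ hi => by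
    rw [getElem_seg, Nat.zero_add, flatWord_eq_getElem hu hi]

theorem seg_flatWord {u : ℕ → List A} (hu : ∀ i, u i ≠ []) (i : ℕ) :
    seg (flatWord u) (blockStart u i) (blockStart u (i + 1)) = u i := by
  have h := seg_append_seg (flatWord u) (Nat.zero_le _)
    ((blockStart_strictMono hu).monotone i.le_succ)
  rw [seg_zero_flatWord hu, seg_zero_flatWord hu, List.range_succ, List.map_append,
    List.flatten_append, List.map_singleton, List.flatten_singleton] at h
  exact List.append_cancel_left h

theorem flatWord_seg (w : ℕ → A) {p : ℕ → ℕ} (hp : StrictMono p) (hp0 : p 0 = 0) :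
    flatWord (fun i => seg w (p i) (p (i + 1))) = w := by
  funext n
  have hn : n < p (n + 1) := hp.le_apply
  rw [flatWord, flatten_map_seg w hp.monotone, hp0, List.getD_eq_getElem _ _ (by simpa using hn),
    getElem_seg, Nat.zero_add]

theorem flatWord_congr {u u' : ℕ → List A} (hu : ∀ i, u i ≠ []) (hu' : ∀ i, u' i ≠ [])
    {m n : ℕ} (h : ∀ i < m, u i = u' i) (hn : n < blockStart u m) :
    flatWord u n = flatWord u' n := by
  have huu' : (List.range m).map u = (List.range m).map u' :=
    List.map_congr_left fun i hi => h i (List.mem_range.1 hi)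
  rw [← length_flatten_map_range] at hn
  rw [flatWord_eq_getElem hu hn, flatWord_eq_getElem hu' (m := m) (by rwa [← huu'])]
  simp only [huu']

end FlatWord

end Words

section Blocks

variable {p : ℕ → ℕ} {N n : ℕ}

theorem not_bddAbove_image_Ici (hp : StrictMono p) : ¬BddAbove (p '' Set.Ici N) :=
  ((Set.Ici_infinite N).image hp.injective.injOn).not_bddAbove

theorem exists_mem_Ico_of_le (hp : StrictMono p) (h : p N ≤ n) :
    ∃ i ≥ N, p i ≤ n ∧ n < p (i + 1) := by
  have hn : n ∈ ⋃ i ∈ Set.Ici N, Set.Ico (p i) (p (Order.succ i)) := by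
    rwa [biUnion_Ici_Ico_map_succ (fun i hi => hp.monotone hi) (not_bddAbove_image_Ici hp)]
  obtain ⟨i, hi, hn⟩ := Set.mem_iUnion₂.1 hn
  exact ⟨i, hi, hn⟩

theorem exists_mem_Ioc_of_lt (hp : StrictMono p) (h : p N < n) :
    ∃ i ≥ N, p i < n ∧ n ≤ p (i + 1) := by
  have hn : n ∈ ⋃ i ∈ Set.Ici N, Set.Ioc (p i) (p (Order.succ i)) := by
    rwa [biUnion_Ici_Ioc_map_succ (fun i hi => hp.monotone hi) (not_bddAbove_image_Ici hp)]
  obtain ⟨i, hi, hn⟩ := Set.mem_iUnion₂.1 hn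
  exact ⟨i, hi, hn⟩

end Blocks

section ColorSequences

variable (c : ℕ → ℕ)

/-- Position `j'` answers the request at position `j` of the color sequence `c`. -/
def Answers (j j' : ℕ) : Prop := j < j' ∧ Even (c j') ∧ c j < c j'

/-- The odd color at position `j` is a request that is not answered up to position `b`. -/
def Unanswered (b j : ℕ) : Prop := Odd (c j) ∧ ∀ j' ≤ b, ¬Answers c j j'

/-- The maximal even color between the positions `a` and `b` (inclusive), or `⊥`. -/
def maxEven (a b : ℕ) : WithBot ℕ :=
  ((Finset.Icc a b).filter fun j => Even (c j)).sup fun j => (c j : WithBot ℕ)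

/-- The maximal color of a request between the positions `a` and `b` (inclusive) that is not
answered up to position `b`, or `⊥`. -/
def maxUnanswered (a b : ℕ) : WithBot ℕ :=
  ((Finset.Icc a b).filter (Unanswered c b)).sup fun j => (c j : WithBot ℕ)

variable {c}

theorem coe_le_maxEven {a b m : ℕ} :
    (m : WithBot ℕ) ≤ maxEven c a b ↔ ∃ j, a ≤ j ∧ j ≤ b ∧ Even (c j) ∧ m ≤ c j := by
  simp [maxEven, and_assoc]

theorem coe_le_maxUnanswered {a b m : ℕ} :
    (m : WithBot ℕ) ≤ maxUnanswered c a b ↔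
      ∃ j, a ≤ j ∧ j ≤ b ∧ Unanswered c b j ∧ m ≤ c j := by
  simp [maxUnanswered, and_assoc]

theorem withBot_le_of_forall_coe_le {x y : WithBot ℕ}
    (h : ∀ m : ℕ, (m : WithBot ℕ) ≤ x → (m : WithBot ℕ) ≤ y) : x ≤ y := by
  cases x with
  | bot => exact bot_le
  | coe m => exact h m le_rfl

theorem withBot_eq_of_forall_coe_le_iff {x y : WithBot ℕ}
    (h : ∀ m : ℕ, (m : WithBot ℕ) ≤ x ↔ (m : WithBot ℕ) ≤ y) : x = y :=
  le_antisymm (withBot_le_of_forall_coe_le fun m => (h m).1)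
    (withBot_le_of_forall_coe_le fun m => (h m).2)

theorem sup_range_even_eq_maxEven {c' : ℕ → ℕ} {a b : ℕ} (h : ∀ j < b + 1 - a, c' j = c (a + j)) :
    ((Finset.range (b + 1 - a)).filter fun j => Even (c' j)).sup
      (fun j => (c' j : WithBot ℕ)) = maxEven c a b := by
  refine withBot_eq_of_forall_coe_le_iff fun m => ?_
  simp only [coe_le_maxEven, Finset.le_sup_iff, WithBot.bot_lt_natCast, Finset.mem_filter,
    Finset.mem_range, Nat.cast_le]
  constructor
  · rintro ⟨j, ⟨hj, he⟩, hm⟩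
    rw [h j hj] at he hm
    exact ⟨a + j, by omega, by omega, he, hm⟩
  · rintro ⟨j, haj, hjb, he, hm⟩
    have hj := h (j - a) (by omega)
    rw [Nat.add_sub_cancel' haj] at hj
    exact ⟨j - a, ⟨by omega, by rwa [hj]⟩, by rwa [hj]⟩

theorem sup_range_unanswered_eq_maxUnanswered {c' : ℕ → ℕ} {a b : ℕ}
    (h : ∀ j < b + 1 - a, c' j = c (a + j)) :
    ((Finset.range (b + 1 - a)).filter fun j => Odd (c' j) ∧
        ∀ j' < b + 1 - a, j < j' → ¬(Even (c' j') ∧ c' j < c' j')).sup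
      (fun j => (c' j : WithBot ℕ)) = maxUnanswered c a b := by
  refine withBot_eq_of_forall_coe_le_iff fun m => ?_
  simp only [coe_le_maxUnanswered, Finset.le_sup_iff, WithBot.bot_lt_natCast, Finset.mem_filter,
    Finset.mem_range, Nat.cast_le]
  constructor
  · rintro ⟨j, ⟨hj, ho, hun⟩, hm⟩
    refine ⟨a + j, by omega, by omega, ⟨h j hj ▸ ho, fun j' hj' hans => ?_⟩, h j hj ▸ hm⟩
    obtain ⟨hlt, he, hc⟩ := hans
    have hj'' := h (j' - a) (by omega)
    rw [Nat.add_sub_cancel' (by omega)] at hj''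
    exact hun (j' - a) (by omega) (by omega) ⟨by rwa [hj''], by rwa [hj'', h j hj]⟩
  · rintro ⟨j, haj, hjb, ⟨ho, hun⟩, hm⟩
    have hj := h (j - a) (by omega)
    rw [Nat.add_sub_cancel' haj] at hj
    refine ⟨j - a, ⟨by omega, by rwa [hj], fun j' hj' hlt hans => ?_⟩, by rwa [hj]⟩
    rw [hj, h j' hj'] at hans
    exact hun (a + j') (by omega) ⟨by omega, hans⟩

theorem maxEven_self (a : ℕ) : maxEven c a a = if Even (c a) then (c a : WithBot ℕ) else ⊥ := by
  by_cases h : Even (c a) <;> simp [maxEven, Finset.filter_singleton, h]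

theorem unanswered_self {a : ℕ} : Unanswered c a a ↔ Odd (c a) :=
  ⟨And.left, fun h => ⟨h, fun _ hj' hans => hj'.not_gt hans.1⟩⟩

theorem maxUnanswered_self (a : ℕ) :
    maxUnanswered c a a = if Odd (c a) then (c a : WithBot ℕ) else ⊥ := by
  by_cases h : Odd (c a) <;>
    simp [maxUnanswered, Finset.filter_singleton, unanswered_self, h]

theorem maxEven_succ {a b : ℕ} (h : a ≤ b) :
    maxEven c a (b + 1) =
      if Even (c (b + 1)) then max (maxEven c a b) (c (b + 1)) else maxEven c a b := by
  refine withBot_eq_of_forall_coe_le_iff fun m => ?_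
  split_ifs with he <;> simp only [le_max_iff, coe_le_maxEven, Nat.cast_le] <;> grind

theorem unanswered_succ {b j : ℕ} :
    Unanswered c (b + 1) j ↔ Unanswered c b j ∧ ¬Answers c j (b + 1) := by
  simp only [Unanswered, Nat.le_succ_iff]
  grind

theorem maxUnanswered_succ_of_odd {a b : ℕ} (h : a ≤ b) (ho : Odd (c (b + 1))) :
    maxUnanswered c a (b + 1) = max (maxUnanswered c a b) (c (b + 1)) := by
  refine withBot_eq_of_forall_coe_le_iff fun m => ?_
  simp only [le_max_iff, coe_le_maxUnanswered, Nat.cast_le, Unanswered, Answers]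
  grind

theorem maxUnanswered_succ_of_lt {a b : ℕ} (he : Even (c (b + 1)))
    (hlt : maxUnanswered c a b < c (b + 1)) : maxUnanswered c a (b + 1) = ⊥ := by
  rw [maxUnanswered, Finset.filter_false_of_mem, Finset.sup_empty]
  intro j hj hun
  rw [Finset.mem_Icc] at hj
  have hjb : j ≠ b + 1 := fun h => Nat.not_even_iff_odd.2 hun.1 (h ▸ he)
  rw [unanswered_succ] at hun
  have hle : (c j : WithBot ℕ) ≤ maxUnanswered c a b :=
    coe_le_maxUnanswered.2 ⟨j, hj.1, by omega, hun.1, le_rfl⟩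
  exact hun.2 ⟨by omega, he, by exact_mod_cast hle.trans_lt hlt⟩

theorem maxUnanswered_succ_of_le {a b : ℕ} (he : Even (c (b + 1)))
    (hle : c (b + 1) ≤ maxUnanswered c a b) :
    maxUnanswered c a (b + 1) = maxUnanswered c a b := by
  refine withBot_eq_of_forall_coe_le_iff fun m => ⟨fun hm => ?_, fun hm => ?_⟩
  · obtain ⟨j, haj, hjb, hun, hmj⟩ := coe_le_maxUnanswered.1 hm
    have hj : j ≠ b + 1 := fun h => Nat.not_even_iff_odd.2 hun.1 (h ▸ he)
    exact coe_le_maxUnanswered.2 ⟨j, haj, by omega, (unanswered_succ.1 hun).1, hmj⟩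
  · have hmax : ((max m (c (b + 1)) : ℕ) : WithBot ℕ) ≤ maxUnanswered c a b := by
      rcases max_choice m (c (b + 1)) with h | h <;> rwa [h]
    obtain ⟨j, haj, hjb, hun, hmj⟩ := coe_le_maxUnanswered.1 hmax
    have hans : ¬Answers c j (b + 1) := fun h => h.2.2.not_ge ((le_max_right _ _).trans hmj)
    exact coe_le_maxUnanswered.2
      ⟨j, haj, hjb.trans b.le_succ, unanswered_succ.2 ⟨hun, hans⟩, (le_max_left _ _).trans hmj⟩

theorem maxEven_eq_bot_or (a b : ℕ) :
    maxEven c a b = ⊥ ∨ ∃ j, Even (c j) ∧ maxEven c a b = c j := by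
  rcases ((Finset.Icc a b).filter fun j => Even (c j)).eq_empty_or_nonempty with h | h
  · exact .inl (by rw [maxEven, h, Finset.sup_empty])
  · obtain ⟨j, hj, hsup⟩ := Finset.exists_mem_eq_sup _ h fun j => (c j : WithBot ℕ)
    exact .inr ⟨j, (Finset.mem_filter.1 hj).2, hsup⟩

theorem maxUnanswered_eq_bot_or (a b : ℕ) :
    maxUnanswered c a b = ⊥ ∨ ∃ j, Odd (c j) ∧ maxUnanswered c a b = c j := by
  rcases ((Finset.Icc a b).filter (Unanswered c b)).eq_empty_or_nonempty with h | h
  · exact .inl (by rw [maxUnanswered, h, Finset.sup_empty])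
  · obtain ⟨j, hj, hsup⟩ := Finset.exists_mem_eq_sup _ h fun j => (c j : WithBot ℕ)
    exact .inr ⟨j, (Finset.mem_filter.1 hj).2.1, hsup⟩

theorem maxEven_ne_bot_or_maxUnanswered_ne_bot {a b : ℕ} (h : a ≤ b) :
    maxEven c a b ≠ ⊥ ∨ maxUnanswered c a b ≠ ⊥ := by
  rcases Nat.even_or_odd (c b) with he | ho
  · exact .inl (ne_bot_of_le_ne_bot (WithBot.coe_ne_bot (a := c b))
      (coe_le_maxEven.2 ⟨b, h, le_rfl, he, le_rfl⟩))
  · exact .inr (ne_bot_of_le_ne_bot (WithBot.coe_ne_bot (a := c b))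
      (coe_le_maxUnanswered.2 ⟨b, h, le_rfl, unanswered_self.2 ho, le_rfl⟩))

end ColorSequences

namespace PACost

section Runs

variable {Q A : Type} (M : PACost Q A)

/-- The sequence of colors visited by the run of `M` on `w` starting in `q`. -/
def colorAt (q : Q) (w : ℕ → A) (n : ℕ) : ℕ := M.Ω (M.stateAt q w n)

theorem foldl_seg (q : Q) (w : ℕ → A) {a b : ℕ} (h : a ≤ b) :
    (seg w a b).foldl M.δ (M.stateAt q w a) = M.stateAt q w b := by
  induction b, h using Nat.le_induction with
  | base => rw [seg_self, List.foldl_nil]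
  | succ b h ih =>
    rw [seg_succ w h, List.foldl_append, ih, List.foldl_cons, List.foldl_nil, stateAt]

theorem scanl_seg (q : Q) (w : ℕ → A) {a b : ℕ} (h : a ≤ b) :
    (seg w a b).scanl M.δ (M.stateAt q w a) = seg (M.stateAt q w) a (b + 1) := by
  induction b, h using Nat.le_induction with
  | base => simp [seg]
  | succ b h ih =>
    rw [seg_succ w h, List.scanl_append, ih, foldl_seg M q w h, seg_succ _ (h.trans b.le_succ)]
    rfl

theorem stateAt_congr (q : Q) {w w' : ℕ → A} {n : ℕ} (h : ∀ j < n, w j = w' j) :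
    M.stateAt q w n = M.stateAt q w' n := by
  rw [← foldl_seg M q w n.zero_le, ← foldl_seg M q w' n.zero_le, stateAt, stateAt,
    seg_congr fun j _ => h j]

theorem segCost_mono (q : Q) (w : ℕ → A) {a b m n : ℕ} (ha : a ≤ m) (hb : n ≤ b) :
    M.segCost q w m n ≤ M.segCost q w a b :=
  Finset.card_le_card (Finset.filter_subset_filter _ (Finset.Ico_subset_Ico ha hb))

theorem segCost_le (q : Q) (w : ℕ → A) (a b : ℕ) : M.segCost q w a b ≤ b - a :=
  (Finset.card_filter_le _ _).trans (Nat.card_Ico a b).le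

theorem segCost_add (q : Q) (w : ℕ → A) {a b e : ℕ} (hab : a ≤ b) (hbe : b ≤ e) :
    M.segCost q w a b + M.segCost q w b e = M.segCost q w a e := by
  rw [segCost, segCost, segCost, ← Finset.Ico_union_Ico_eq_Ico hab hbe, Finset.filter_union,
    Finset.card_union_of_disjoint
      (Finset.disjoint_filter_filter (Finset.Ico_disjoint_Ico_consecutive a b e))]

theorem segCost_pos_iff {q : Q} {w : ℕ → A} {a b : ℕ} :
    0 < M.segCost q w a b ↔ ∃ j, a ≤ j ∧ j < b ∧ M.Cst (M.stateAt q w j) (w j) = true := by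
  simp [segCost, Finset.card_pos, Finset.Nonempty, and_assoc]

theorem zip_any_seg_iff (q : Q) (w : ℕ → A) {a b : ℕ} :
    ((seg (M.stateAt q w) a (b + 1)).zip (seg w a b)).any (fun p => M.Cst p.1 p.2) =
      decide (0 < M.segCost q w a b) := by
  rw [Bool.eq_iff_iff, List.any_eq_true, decide_eq_true_iff, segCost_pos_iff]
  constructor
  · rintro ⟨p, hp, hcost⟩
    obtain ⟨i, hi, rfl⟩ := List.mem_iff_getElem.1 hp
    simp only [List.length_zip, length_seg, lt_inf_iff] at hi
    simp only [List.getElem_zip, getElem_seg] at hcost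
    exact ⟨a + i, by omega, by omega, hcost⟩
  · rintro ⟨j, haj, hjb, hcost⟩
    refine ⟨(M.stateAt q w j, w j), List.mem_iff_getElem.2 ⟨j - a, ?_, ?_⟩, hcost⟩
    · simp only [List.length_zip, length_seg, lt_inf_iff]
      omega
    · simp [Nat.add_sub_cancel' haj]

theorem runType_seg (q : Q) (w : ℕ → A) {a b : ℕ} (h : a ≤ b) :
    M.runType (M.stateAt q w a) (seg w a b) =
      (M.stateAt q w a, M.stateAt q w b, maxEven (M.colorAt q w) a b,
        maxUnanswered (M.colorAt q w) a b, decide (0 < M.segCost q w a b)) := by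
  have hcolor : ∀ j < b + 1 - a,
      M.Ω ((seg (M.stateAt q w) a (b + 1)).getD j (M.stateAt q w a)) = M.colorAt q w (a + j) :=
    fun j hj => by rw [List.getD_eq_getElem _ _ (by simpa using hj), getElem_seg, colorAt]
  simp only [runType, scanl_seg M q w h, foldl_seg M q w h, length_seg, zip_any_seg_iff,
    sup_range_even_eq_maxEven hcolor, sup_range_unanswered_eq_maxUnanswered hcolor]

theorem runType_seg_self (q : Q) (w : ℕ → A) (a : ℕ) :
    M.runType (M.stateAt q w a) (seg w a a) = M.InitT (M.stateAt q w a) := by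
  rw [runType_seg M q w le_rfl, maxEven_self, maxUnanswered_self]
  simp only [segCost, Finset.Ico_self, Finset.filter_empty, Finset.card_empty, lt_irrefl,
    decide_false]
  rfl

theorem maxUnanswered_colorAt_succ (q : Q) (w : ℕ → A) {a b : ℕ} (h : a ≤ b) :
    maxUnanswered (M.colorAt q w) a (b + 1) =
      if Odd (M.colorAt q w (b + 1)) then
        max (maxUnanswered (M.colorAt q w) a b) (M.colorAt q w (b + 1))
      else if ∃ c : ℕ, maxUnanswered (M.colorAt q w) a b = c ∧ M.colorAt q w (b + 1) ∈ M.Ans c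
      then ⊥
      else maxUnanswered (M.colorAt q w) a b := by
  split_ifs with hodd hans
  · exact maxUnanswered_succ_of_odd h hodd
  · obtain ⟨c, hc, -, hlt, heven⟩ := hans
    exact maxUnanswered_succ_of_lt heven (by rw [hc]; exact_mod_cast hlt)
  · rw [Nat.not_odd_iff_even] at hodd
    rcases lt_or_ge (maxUnanswered (M.colorAt q w) a b) (M.colorAt q w (b + 1)) with hlt | hle
    · rw [maxUnanswered_succ_of_lt hodd hlt]
      rcases maxUnanswered_eq_bot_or (c := M.colorAt q w) a b with hbot | ⟨j, -, hj⟩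
      · rw [hbot]
      · exact absurd ⟨_, hj, ⟨_, rfl⟩, by rw [hj] at hlt; exact_mod_cast hlt, hodd⟩ hans
    · exact maxUnanswered_succ_of_le hodd hle

theorem segCost_succ_pos (q : Q) (w : ℕ → A) {a b : ℕ} (h : a ≤ b) :
    decide (0 < M.segCost q w a (b + 1)) =
      (decide (0 < M.segCost q w a b) || M.Cst (M.stateAt q w b) (w b)) := by
  rw [Bool.eq_iff_iff, Bool.or_eq_true, decide_eq_true_iff, decide_eq_true_iff, segCost_pos_iff,
    segCost_pos_iff]
  simp only [Nat.lt_succ_iff_lt_or_eq]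
  grind

theorem runType_seg_succ (q : Q) (w : ℕ → A) {a b : ℕ} (h : a ≤ b) :
    M.runType (M.stateAt q w a) (seg w a (b + 1)) =
      M.UpdT (M.runType (M.stateAt q w a) (seg w a b)) (w b) := by
  rw [runType_seg M q w h, runType_seg M q w (h.trans b.le_succ), maxEven_succ h,
    maxUnanswered_colorAt_succ M q w h, segCost_succ_pos M q w h]
  rfl

theorem foldl_UpdT_seg (q : Q) (w : ℕ → A) {a b : ℕ} (h : a ≤ b) :
    (seg w a b).foldl M.UpdT (M.InitT (M.stateAt q w a)) =
      M.runType (M.stateAt q w a) (seg w a b) := by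
  induction b, h using Nat.le_induction with
  | base => rw [runType_seg_self, seg_self, List.foldl_nil]
  | succ b h ih =>
    rw [runType_seg_succ M q w h, ← ih, seg_succ w h, List.foldl_append, List.foldl_cons,
      List.foldl_nil]

theorem runType_snd_fst (q : Q) (l : List A) : (M.runType q l).2.1 = l.foldl M.δ q := rfl

theorem runType_eq_foldl [Nonempty A] (q : Q) (l : List A) :
    M.runType q l = l.foldl M.UpdT (M.InitT q) := by
  obtain ⟨w, hw⟩ := exists_seg_eq l
  rw [← hw]
  exact (foldl_UpdT_seg M q w l.length.zero_le).symm

end Runs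

section Acceptance

variable {Q A : Type} {M : PACost Q A} {q q' : Q} {w w' : ℕ → A}

theorem accepting_iff :
    M.Accepting q w ↔ ∃ B N : ℕ, ∀ n ≥ N, Odd (M.colorAt q w n) →
      ∃ n', Answers (M.colorAt q w) n n' ∧ M.segCost q w n n' ≤ B := by
  constructor
  · intro h
    obtain ⟨L, hL⟩ := ENat.ne_top_iff_exists.1 h.ne
    have hlt : Filter.limsup (M.Cor q w) Filter.atTop < ((L + 1 : ℕ) : ℕ∞) := by
      rw [← hL]
      exact_mod_cast L.lt_succ_self
    obtain ⟨N, hN⟩ := Filter.eventually_atTop.1 (Filter.eventually_lt_of_limsup_lt hlt)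
    refine ⟨L + 1, N, fun n hn hodd => ?_⟩
    have hcor := hN n hn
    rw [Cor, ← colorAt, if_neg (Nat.not_even_iff_odd.2 hodd), sInf_lt_iff] at hcor
    obtain ⟨_, ⟨n', hn', ⟨-, hlt, heven⟩, rfl⟩, hcost⟩ := hcor
    exact ⟨n', ⟨hn', heven, hlt⟩, by exact_mod_cast hcost.le⟩
  · rintro ⟨B, N, hacc⟩
    refine lt_of_le_of_lt (Filter.limsup_le_of_le (a := (B : ℕ∞)) (h := ?_))
      (ENat.natCast_lt_top B)
    filter_upwards [Filter.eventually_ge_atTop N] with n hn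
    rw [Cor]
    split_ifs with heven
    · exact bot_le
    · obtain ⟨n', ⟨hn', heven', hlt⟩, hcost⟩ := hacc n hn (Nat.not_even_iff_odd.1 heven)
      exact sInf_le_of_le ⟨n', hn', ⟨⟨_, rfl⟩, hlt, heven'⟩, rfl⟩ (by exact_mod_cast hcost)

theorem segCost_blocks_le {p p' : ℕ → ℕ} (hp : Monotone p) (hp' : Monotone p') {B : ℕ}
    (hB : ∀ i, p' (i + 1) ≤ p' i + B)
    (hpos : ∀ i, 0 < M.segCost q' w' (p' i) (p' (i + 1)) → 0 < M.segCost q w (p i) (p (i + 1)))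
    {a b : ℕ} (hab : a ≤ b) :
    M.segCost q' w' (p' a) (p' b) ≤ B * M.segCost q w (p a) (p b) := by
  induction b, hab using Nat.le_induction with
  | base => simp [segCost]
  | succ b hab ih =>
    rw [← segCost_add M q' w' (hp' hab) (hp' b.le_succ),
      ← segCost_add M q w (hp hab) (hp b.le_succ), Nat.mul_add]
    refine Nat.add_le_add ih ?_
    rcases Nat.eq_zero_or_pos (M.segCost q' w' (p' b) (p' (b + 1))) with h0 | h0
    · exact h0.trans_le (Nat.zero_le _)
    · calc M.segCost q' w' (p' b) (p' (b + 1)) ≤ p' (b + 1) - p' b := segCost_le M q' w' _ _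
        _ ≤ B := Nat.sub_le_iff_le_add'.2 (hB b)
        _ ≤ B * M.segCost q w (p b) (p (b + 1)) := Nat.le_mul_of_pos_right B (hpos b h0)

theorem Accepting.of_runType_eq {p p' : ℕ → ℕ} (hp : StrictMono p) (hp' : StrictMono p') {B : ℕ}
    (hB : ∀ i, p' (i + 1) ≤ p' i + B)
    (htype : ∀ i, M.runType (M.stateAt q' w' (p' i)) (seg w' (p' i) (p' (i + 1))) =
      M.runType (M.stateAt q w (p i)) (seg w (p i) (p (i + 1))))
    (h : M.Accepting q w) : M.Accepting q' w' := by
  simp only [runType_seg M _ _ (hp.monotone (Nat.le_succ _)),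
    runType_seg M _ _ (hp'.monotone (Nat.le_succ _)), Prod.mk.injEq, decide_eq_decide] at htype
  have hcosts {a b : ℕ} (hab : a ≤ b) :=
    segCost_blocks_le hp.monotone hp'.monotone hB (fun i => (htype i).2.2.2.2.1) hab
  obtain ⟨B₀, N₀, hacc⟩ := accepting_iff.1 h
  refine accepting_iff.2 ⟨B + B * B₀ + B, p' N₀, fun n hn hodd => ?_⟩
  obtain ⟨i, hi, hin, hni⟩ := exists_mem_Ico_of_le hp' hn
  by_cases hans : ∃ n' ≤ p' (i + 1), Answers (M.colorAt q' w') n n'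
  · obtain ⟨n', hn', hans⟩ := hans
    have hcost := segCost_le M q' w' n n'
    have hBi := hB i
    exact ⟨n', hans, by omega⟩
  push Not at hans
  -- The open request `n` is matched by a request `m` of the first run that is at least as high. The
  -- block containing the answer to `m` is matched by one with an even color that is as high.
  obtain ⟨m, him, hmi, hun, hnm⟩ := coe_le_maxUnanswered.1 ((coe_le_maxUnanswered.2
    ⟨n, hin, hni.le, ⟨hodd, hans⟩, le_rfl⟩).trans_eq (htype i).2.2.2.1)
  obtain ⟨m', hans', hcost⟩ := hacc m (hi.le.trans (hp.le_apply.trans him)) hun.1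
  obtain ⟨j, hij, hjm, hmj⟩ :=
    exists_mem_Ioc_of_lt hp (not_le.1 fun hle => hun.2 m' hle hans')
  obtain ⟨n', hjn, hnj, heven, hmn⟩ := coe_le_maxEven.1 ((coe_le_maxEven.2
    ⟨m', hjm.le, hmj, hans'.2.1, le_rfl⟩).trans_eq (htype j).2.2.1.symm)
  have hij' : p' (i + 1) ≤ p' j := hp'.monotone hij
  have hj' : p' j ≤ p' (j + 1) := hp'.monotone j.le_succ
  refine ⟨n', ⟨by omega, heven, (hnm.trans_lt hans'.2.2).trans_le hmn⟩, ?_⟩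
  have hblock (l : ℕ) : M.segCost q' w' (p' l) (p' (l + 1)) ≤ B :=
    (segCost_le M q' w' _ _).trans (Nat.sub_le_iff_le_add'.2 (hB l))
  have hmid : M.segCost q' w' (p' (i + 1)) (p' j) ≤ B * B₀ :=
    (hcosts hij).trans (Nat.mul_le_mul_left B ((segCost_mono M q w hmi hjm.le).trans hcost))
  calc M.segCost q' w' n n' ≤ M.segCost q' w' (p' i) (p' (j + 1)) :=
        segCost_mono M q' w' hin hnj
    _ = M.segCost q' w' (p' i) (p' (i + 1)) + M.segCost q' w' (p' (i + 1)) (p' j) +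
          M.segCost q' w' (p' j) (p' (j + 1)) := by
        rw [segCost_add M q' w' (hp'.monotone i.le_succ) hij',
          segCost_add M q' w' ((hp'.monotone i.le_succ).trans hij') hj']
    _ ≤ B + B * B₀ + B := Nat.add_le_add (Nat.add_le_add (hblock i) hmid) (hblock j)

end Acceptance

section TypeCounting

variable {Q A : Type} [Fintype Q] (M : PACost Q A)

/-- The possible color entries of a type for the colors satisfying `P`. -/
def colorEntries (P : ℕ → Prop) [DecidablePred P] : Finset (WithBot ℕ) :=
  insert ⊥ (((Finset.univ.image M.Ω).filter P).image Nat.cast)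

/-- A finite set containing the types of all runs of `M`. Each run visits a last color, which is
even or an unanswered request, so the color entries of its type are not both `⊥`. -/
def typeFinset : Finset (RType Q) :=
  ((Finset.univ : Finset (Q × Q × Bool)) ×ˢ
      (M.colorEntries Even ×ˢ M.colorEntries Odd).erase (⊥, ⊥)).image
    fun x => (x.1.1, x.1.2.1, x.2.1, x.2.2, x.1.2.2)

theorem mem_colorEntries {P : ℕ → Prop} [DecidablePred P] {q : Q} {w : ℕ → A} {x : WithBot ℕ}
    (h : x = ⊥ ∨ ∃ j, P (M.colorAt q w j) ∧ x = M.colorAt q w j) : x ∈ M.colorEntries P := by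
  rcases h with rfl | ⟨j, hP, rfl⟩
  · exact Finset.mem_insert_self _ _
  · refine Finset.mem_insert_of_mem (Finset.mem_image_of_mem _ (Finset.mem_filter.2 ⟨?_, hP⟩))
    exact Finset.mem_image_of_mem _ (Finset.mem_univ _)

theorem runType_mem_typeFinset [Nonempty A] (q : Q) (l : List A) :
    M.runType q l ∈ M.typeFinset := by
  obtain ⟨w, hw⟩ := exists_seg_eq l
  have htype := runType_seg M q w l.length.zero_le
  rw [hw] at htype
  refine Finset.mem_image.2 ⟨((q, _, _), (_, _)), Finset.mem_product.2 ⟨Finset.mem_univ _,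
    Finset.mem_erase.2 ⟨fun h => ?_, Finset.mem_product.2
      ⟨mem_colorEntries M (maxEven_eq_bot_or 0 l.length),
        mem_colorEntries M (maxUnanswered_eq_bot_or 0 l.length)⟩⟩⟩, htype.symm⟩
  rcases maxEven_ne_bot_or_maxUnanswered_ne_bot (c := M.colorAt q w) l.length.zero_le with hne | hne
  · exact hne (Prod.ext_iff.1 h).1
  · exact hne (Prod.ext_iff.1 h).2

theorem card_colorEntries_le (P : ℕ → Prop) [DecidablePred P] :
    (M.colorEntries P).card ≤ ((Finset.univ.image M.Ω).filter P).card + 1 :=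
  (Finset.card_insert_le _ _).trans (Nat.add_le_add_right Finset.card_image_le 1)

theorem card_typeFinset_le :
    M.typeFinset.card ≤ 2 * Fintype.card Q ^ 2 * (Finset.univ.image M.Ω).card ^ 2 := by
  set e := ((Finset.univ.image M.Ω).filter Even).card
  set o := ((Finset.univ.image M.Ω).filter Odd).card
  have heo : e + o = (Finset.univ.image M.Ω).card := by
    simp only [e, o, ← Nat.not_even_iff_odd]
    exact Finset.card_filter_add_card_filter_not _
  have hcolors : ((M.colorEntries Even ×ˢ M.colorEntries Odd).erase (⊥, ⊥)).card ≤ (e + o) ^ 2 := by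
    have hbot : (⊥, ⊥) ∈ M.colorEntries Even ×ˢ M.colorEntries Odd :=
      Finset.mem_product.2 ⟨Finset.mem_insert_self _ _, Finset.mem_insert_self _ _⟩
    rw [Finset.card_erase_of_mem hbot, Finset.card_product]
    have hmul : _ ≤ (e + 1) * (o + 1) :=
      Nat.mul_le_mul (card_colorEntries_le M Even) (card_colorEntries_le M Odd)
    have he := Nat.le_self_pow two_ne_zero e
    have ho := Nat.le_self_pow two_ne_zero o
    have hsq : (e + o) ^ 2 + 1 = e ^ 2 + o ^ 2 + e * o + e * o + 1 := by ring
    have hexp : (e + 1) * (o + 1) = e * o + e + o + 1 := by ring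
    omega
  calc M.typeFinset.card ≤ _ := Finset.card_image_le
    _ = 2 * Fintype.card Q ^ 2 *
          ((M.colorEntries Even ×ˢ M.colorEntries Odd).erase (⊥, ⊥)).card := by
        rw [Finset.card_product, Finset.card_univ, Fintype.card_prod, Fintype.card_prod,
          Fintype.card_bool]
        ring
    _ ≤ 2 * Fintype.card Q ^ 2 * (Finset.univ.image M.Ω).card ^ 2 := by
        rw [← heo]
        exact Nat.mul_le_mul_left _ hcolors

end TypeCounting

section BlockTypes

variable {Q A : Type} (M : PACost Q A)

/-- The type of the block of the run of `M` on `w` from `q` between the positions `p i` and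
`p (i + 1)`. -/
def blockType (q : Q) (w : ℕ → A) (p : ℕ → ℕ) (i : ℕ) : RType Q :=
  M.runType (M.stateAt q w (p i)) (seg w (p i) (p (i + 1)))

variable {q : Q} {w : ℕ → A} {p : ℕ → ℕ}

theorem blockType_congr {w' : ℕ → A} {p' : ℕ → ℕ} {i : ℕ}
    (hp : p i ≤ p (i + 1)) (hi : p i = p' i) (hi' : p (i + 1) = p' (i + 1))
    (hw : ∀ n < p (i + 1), w n = w' n) : M.blockType q w p i = M.blockType q w' p' i := by
  rw [blockType, blockType, ← hi, ← hi', seg_congr fun n _ => hw n,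
    stateAt_congr M _ fun n hn => hw n (hn.trans_le hp)]

theorem eq_stateAt_blockType (hp : Monotone p)
    (hp0 : p 0 = 0) {s : ℕ → Q × RType Q}
    (hs : ∀ i, s (i + 1) = ((seg w (p i) (p (i + 1))).foldl M.δ (s i).1,
      M.runType (s i).1 (seg w (p i) (p (i + 1))))) (i : ℕ) :
    s (i + 1) = (M.stateAt (s 0).1 w (p (i + 1)), M.blockType (s 0).1 w p i) := by
  have hstate i : (s i).1 = M.stateAt (s 0).1 w (p i) := by
    induction i with
    | zero => rw [hp0, stateAt]
    | succ i ih => rw [hs, ih, foldl_seg M _ w (hp i.le_succ)]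
  rw [hs, hstate i, foldl_seg M _ w (hp i.le_succ), blockType]

end BlockTypes

section Representatives

variable {Q A : Type} (M : PACost Q A)

/-- `rep` maps the type of every non-empty run of `M` to (the first state and the word of) a
non-empty run of the same type. -/
def Represents (rep : RType Q → Q × List A) : Prop :=
  ∀ t, (∃ (q : Q) (l : List A), l ≠ [] ∧ M.runType q l = t) →
    (rep t).2 ≠ [] ∧ M.runType (rep t).1 (rep t).2 = t

variable {M} {rep : RType Q → Q × List A} {q : Q} {w : ℕ → A} {p : ℕ → ℕ}

theorem Represents.rep_blockType (hrep : M.Represents rep) (hp : StrictMono p) (i : ℕ) :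
    (rep (M.blockType q w p i)).2 ≠ [] ∧ (rep (M.blockType q w p i)).1 = M.stateAt q w (p i) ∧
      M.runType (M.stateAt q w (p i)) (rep (M.blockType q w p i)).2 = M.blockType q w p i := by
  obtain ⟨hne, htype⟩ :=
    hrep (M.blockType q w p i) ⟨_, _, seg_ne_nil w (hp i.lt_succ_self), rfl⟩
  have hfst : (rep (M.blockType q w p i)).1 = M.stateAt q w (p i) := congrArg Prod.fst htype
  exact ⟨hne, hfst, hfst ▸ htype⟩

variable [Inhabited A]

theorem Represents.stateAt_flatWord (hrep : M.Represents rep) (hp : StrictMono p) (i : ℕ) :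
    M.stateAt (M.stateAt q w (p 0)) (flatWord fun i => (rep (M.blockType q w p i)).2)
      (blockStart (fun i => (rep (M.blockType q w p i)).2) i) = M.stateAt q w (p i) := by
  have hne j := (hrep.rep_blockType (q := q) (w := w) hp j).1
  induction i with
  | zero => rw [blockStart_zero, stateAt]
  | succ i ih =>
    rw [← foldl_seg M _ _ ((blockStart_strictMono hne).monotone i.le_succ), ih, seg_flatWord hne,
      ← runType_snd_fst, (hrep.rep_blockType hp i).2.2, blockType, runType_snd_fst,
      foldl_seg M q w (hp.monotone i.le_succ)]

theorem Represents.blockType_flatWord (hrep : M.Represents rep) (hp : StrictMono p) (i : ℕ) :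
    M.blockType (M.stateAt q w (p 0)) (flatWord fun i => (rep (M.blockType q w p i)).2)
      (blockStart fun i => (rep (M.blockType q w p i)).2) i = M.blockType q w p i := by
  have hne j := (hrep.rep_blockType (q := q) (w := w) hp j).1
  rw [blockType, hrep.stateAt_flatWord hp, seg_flatWord hne, (hrep.rep_blockType hp i).2.2]

theorem Represents.accepting_of_flatWord (hrep : M.Represents rep) (hp : StrictMono p) {B : ℕ}
    (hB : ∀ i, p (i + 1) ≤ p i + B)
    (h : M.Accepting (rep (M.blockType q w p 0)).1
      (flatWord fun i => (rep (M.blockType q w p i)).2)) :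
    M.Accepting q w := by
  rw [(hrep.rep_blockType hp 0).2.1] at h
  exact h.of_runType_eq (blockStart_strictMono fun i => (hrep.rep_blockType hp i).1) hp hB
    fun i => (hrep.blockType_flatWord hp i).symm

theorem Represents.accepting_flatWord [Finite Q] (hrep : M.Represents rep) (hp : StrictMono p)
    (h : M.Accepting q w) :
    M.Accepting (rep (M.blockType q w p 0)).1
      (flatWord fun i => (rep (M.blockType q w p i)).2) := by
  have := Fintype.ofFinite Q
  rw [(hrep.rep_blockType hp 0).2.1]
  refine h.of_runType_eq hp (blockStart_strictMono fun i => (hrep.rep_blockType hp i).1)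
    (B := M.typeFinset.sup fun t => (rep t).2.length) (fun i => ?_) (hrep.blockType_flatWord hp)
  rw [blockStart_succ]
  exact Nat.add_le_add_left (Finset.le_sup (f := fun t => (rep t).2.length)
    (runType_mem_typeFinset M _ _)) _

end Representatives

section Projection

variable {Q I O : Type} (M : PACost Q (I × O))

theorem mem_dPPlus {S : Set (Q × RType Q)} {x : List I} {s : Q × RType Q} :
    s ∈ M.dPPlus S x ↔ ∃ s₀ ∈ S, ∃ y : List O, y.length = x.length ∧
      s = ((x.zip y).foldl M.δ s₀.1, (x.zip y).foldl M.UpdT s₀.2) := by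
  induction x generalizing S with
  | nil => simp [dPPlus]
  | cons a x ih =>
    rw [dPPlus, List.foldl_cons, ← dPPlus, ih]
    constructor
    · rintro ⟨_, ⟨s₀, hs₀, b, rfl⟩, y, hy, rfl⟩
      exact ⟨s₀, hs₀, b :: y, by simp [hy], rfl⟩
    · rintro ⟨s₀, hs₀, _ | ⟨b, y⟩, hy, rfl⟩
      · simp at hy
      · exact ⟨_, ⟨s₀, hs₀, b, rfl⟩, y, by simpa using hy, rfl⟩

theorem rfun_append_congr {x x' : List I} (h : M.rfun x = M.rfun x') (z : List I) :
    M.rfun (x ++ z) = M.rfun (x' ++ z) := by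
  funext q
  have hq : (x.foldl M.dP {(q, M.InitT q)}) = x'.foldl M.dP {(q, M.InitT q)} := congrFun h q
  simp only [rfun, dPPlus, List.foldl_append, hq]

section Nonempty

variable [Nonempty I] [Nonempty O]

theorem mem_rfun {x : List I} {q : Q} {s : Q × RType Q} :
    s ∈ M.rfun x q ↔ ∃ y : List O, y.length = x.length ∧
      s = ((x.zip y).foldl M.δ q, M.runType q (x.zip y)) := by
  simp only [rfun, mem_dPPlus, Set.mem_singleton_iff, exists_eq_left, runType_eq_foldl]

theorem blockType_mem_rfun (q : Q) (w : ℕ → I × O) {p : ℕ → ℕ} (hp : Monotone p) (i : ℕ) :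
    (M.stateAt q w (p (i + 1)), M.blockType q w p i) ∈
      M.rfun (seg (fun n => (w n).1) (p i) (p (i + 1))) (M.stateAt q w (p i)) := by
  refine (mem_rfun M).2 ⟨seg (fun n => (w n).2) (p i) (p (i + 1)), by simp, ?_⟩
  rw [zip_seg, foldl_seg M q w (hp i.le_succ), blockType]

end Nonempty

end Projection

section Pumping

variable {Q I O : Type} [Fintype Q] [Nonempty I] [Nonempty O] (M : PACost Q (I × O))

/-- The types of the runs of `M` on words with first component `x`. -/
def inputTypes (x : List I) : Finset (RType Q) :=
  M.typeFinset.filter fun t => (t.2.1, t) ∈ M.rfun x t.1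

theorem mem_rfun_iff_mem_inputTypes {x : List I} {q : Q} {s : Q × RType Q} :
    s ∈ M.rfun x q ↔ s.2 ∈ M.inputTypes x ∧ s.2.1 = q ∧ s.2.2.1 = s.1 := by
  constructor
  · intro hs
    obtain ⟨y, -, rfl⟩ := (mem_rfun M).1 hs
    exact ⟨Finset.mem_filter.2 ⟨runType_mem_typeFinset M q _, hs⟩, rfl, rfl⟩
  · rintro ⟨hs, rfl, hs₁⟩
    have h := (Finset.mem_filter.1 hs).2
    rwa [hs₁] at h

theorem rfun_eq_of_inputTypes_eq {x x' : List I} (h : M.inputTypes x = M.inputTypes x') :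
    M.rfun x = M.rfun x' := by
  ext q s
  rw [mem_rfun_iff_mem_inputTypes, h, mem_rfun_iff_mem_inputTypes]

theorem exists_append_rfun_eq {x : List I} (hx : 2 ^ M.typeFinset.card ≤ x.length) :
    ∃ u v z, x = u ++ v ++ z ∧ v ≠ [] ∧ M.rfun (u ++ v) = M.rfun u := by
  obtain ⟨i, hi, j, hj, hij, heq⟩ := Finset.exists_ne_map_eq_of_card_lt_of_maps_to
    (s := Finset.range (x.length + 1)) (t := M.typeFinset.powerset)
    (f := fun i => M.inputTypes (x.take i))
    (by rw [Finset.card_powerset, Finset.card_range]; omega)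
    fun i _ => Finset.mem_coe.2 (Finset.mem_powerset.2 (Finset.filter_subset _ _))
  wlog hlt : i < j generalizing i j
  · exact this j hj i hi hij.symm heq.symm (by omega)
  have hj' := Finset.mem_range.1 hj
  have htake : x.take i ++ (x.drop i).take (j - i) = x.take j := by
    rw [← List.take_add, Nat.add_sub_cancel' hlt.le]
  refine ⟨x.take i, (x.drop i).take (j - i), x.drop j, by rw [htake, List.take_append_drop],
    List.ne_nil_of_length_pos (by simp; omega), ?_⟩
  rw [htake, rfun_eq_of_inputTypes_eq M heq]

theorem exists_le_length_rfun_eq {x : List I} (hx : 2 ^ M.typeFinset.card ≤ x.length) (N : ℕ) :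
    ∃ x' : List I, N ≤ x'.length ∧ M.rfun x' = M.rfun x := by
  obtain ⟨u, v, z, rfl, hv, huv⟩ := exists_append_rfun_eq M hx
  suffices h : ∃ z' : List I, N ≤ z'.length ∧ M.rfun (u ++ z') = M.rfun (u ++ v ++ z) by
    obtain ⟨z', hz', heq⟩ := h
    exact ⟨u ++ z', hz'.trans (by simp), heq⟩
  induction N with
  | zero => exact ⟨v ++ z, Nat.zero_le _, by rw [List.append_assoc]⟩
  | succ N ih =>
    obtain ⟨z', hz', heq⟩ := ih
    have hv' := List.length_pos_of_ne_nil hv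
    refine ⟨v ++ z', by rw [List.length_append]; omega, ?_⟩
    rw [← List.append_assoc, rfun_append_congr M huv, heq]

theorem exists_le_length_rfun_eq_of_mem_Rcls {d : ℕ} (hd : 2 ^ M.typeFinset.card ≤ 2 * d)
    {r : Q → Set (Q × RType Q)} (hr : r ∈ M.Rcls d) (N : ℕ) :
    ∃ x : List I, N ≤ x.length ∧ M.rfun x = r := by
  obtain ⟨x, hx, rfl⟩ := hr
  exact exists_le_length_rfun_eq M (hx ▸ hd) N

end Pumping

end PACost

section Lookahead

/-- The function `F` on infinite words has lookahead `g` if the letter at position `i` of `F α`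
depends only on the first `g i` letters of `α`. -/
def HasLookahead {X Y : Type} (F : (ℕ → X) → ℕ → Y) (g : ℕ → ℕ) : Prop :=
  ∀ i α α', (∀ j < g i, α j = α' j) → F α i = F α' i

theorem hasLookahead_flatWord {X A : Type} [Inhabited A] {Y : (ℕ → X) → ℕ → List A} {g : ℕ → ℕ}
    (hY : HasLookahead Y g) (hg : Monotone g) (hne : ∀ α i, Y α i ≠ []) :
    HasLookahead (fun α => flatWord (Y α)) g := fun n α α' h =>
  flatWord_congr (hne α) (hne α') (m := n + 1)
    (fun i hi => hY i α α' fun j hj => h j (hj.trans_le (hg (Nat.le_of_lt_succ hi))))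
    (blockStart_strictMono (hne α)).le_apply

variable {I O : Type} [Inhabited I] {L : Set (ℕ → I × O)}

theorem OWins.exists_hasLookahead {f : ℕ → ℕ} (hf : DelayFn f) (h : OWins f L) :
    ∃ (F : (ℕ → I) → ℕ → O) (g : ℕ → ℕ),
      HasLookahead F g ∧ ∀ α, (fun n => (α n, F α n)) ∈ L := by
  obtain ⟨τ, hτ⟩ := h
  set p : ℕ → ℕ := fun i => ∑ l ∈ Finset.range i, f l
  have hsucc i : p (i + 1) = p i + f i := Finset.sum_range_succ _ _
  have hp : StrictMono p := strictMono_nat_of_lt_succ fun i => by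
    have := hf i
    rw [hsucc]
    omega
  refine ⟨fun α i => τ (seg α 0 (p (i + 1))), fun i => p (i + 1),
    fun i α α' h => congrArg τ (seg_congr fun j _ => h j), fun α => ?_⟩
  have hwin := hτ (fun i => seg α (p i) (p (i + 1))) (fun i => τ (seg α 0 (p (i + 1))))
    (fun i => by simp [hsucc]) fun i => congrArg τ (flatten_map_seg α hp.monotone (i + 1)).symm
  rwa [flatWord_seg α hp rfl] at hwin

theorem HasLookahead.exists_OWins {F : (ℕ → I) → ℕ → O} {g : ℕ → ℕ} (hF : HasLookahead F g)
    (hL : ∀ α, (fun n => (α n, F α n)) ∈ L) : ∃ f, DelayFn f ∧ OWins f L := by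
  set p : ℕ → ℕ := fun i => ∑ l ∈ Finset.range (i + 1), (g l + 1)
  have hp : StrictMono p := strictMono_nat_of_lt_succ fun i => by
    simp only [p, Finset.sum_range_succ _ (i + 1)]
    omega
  have hgp i : g i < p i := by
    simp only [p, Finset.sum_range_succ]
    omega
  -- The length of the input seen so far determines the current round.
  refine ⟨fun i => g i + 1, fun i => Nat.succ_pos _,
    fun x => F (fun j => x.getD j default) (Function.invFun p x.length), fun u v hu hv => ?_⟩
  have hne i : u i ≠ [] := List.ne_nil_of_length_pos (by rw [hu]; exact Nat.succ_pos _)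
  have hstart i : blockStart u (i + 1) = p i := Finset.sum_congr rfl fun l _ => hu l
  have hhist i : oHist u i = seg (flatWord u) 0 (p i) := by
    rw [← hstart, seg_zero_flatWord hne, oHist]
  have hvF i : v i = F (flatWord u) i := by
    have hround : Function.invFun p (seg (flatWord u) 0 (p i)).length = i := by
      rw [length_seg, Nat.sub_zero, Function.leftInverse_invFun hp.injective]
    simp only [hv, hhist, hround]
    refine hF i _ _ fun j hj => ?_
    rw [List.getD_eq_getElem _ _ (by rw [length_seg]; have := hgp i; omega), getElem_seg,
      Nat.zero_add]
  simpa only [hvF] using hL (flatWord u)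

end Lookahead

section AdaptiveBlocks

variable {X A : Type} (pick : X → ℕ → List A)

/-- The position at which the next block starts if the blocks are chosen by `pick`, depending on a
symbol of `S` and on the position reached so far. -/
def adaptiveStart (S : ℕ → X) : ℕ → ℕ
  | 0 => 0
  | i + 1 => adaptiveStart S i + (pick (S i) (adaptiveStart S i)).length

/-- The `i`-th block chosen by `pick` on the sequence of symbols `S`. -/
def adaptiveBlock (S : ℕ → X) (i : ℕ) : List A := pick (S i) (adaptiveStart pick S i)

theorem blockStart_adaptiveBlock (S : ℕ → X) (i : ℕ) :
    blockStart (adaptiveBlock pick S) i = adaptiveStart pick S i := by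
  induction i with
  | zero => rfl
  | succ i ih => rw [blockStart_succ, ih, adaptiveStart, adaptiveBlock]

theorem hasLookahead_adaptiveStart : HasLookahead (adaptiveStart pick) id := by
  intro i S S' h
  induction i with
  | zero => rfl
  | succ i ih => rw [adaptiveStart, adaptiveStart, ih fun j hj => h j (hj.trans i.lt_succ_self),
      h i i.lt_succ_self]

theorem hasLookahead_adaptiveBlock : HasLookahead (adaptiveBlock pick) (· + 1) := fun i S S' h => by
  rw [adaptiveBlock, adaptiveBlock, h i i.lt_succ_self,
    hasLookahead_adaptiveStart pick i S S' fun j hj => h j (hj.trans i.lt_succ_self)]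

variable {I O : Type} [Inhabited I] (pick : X → ℕ → List I) (F : (ℕ → I) → ℕ → O)

/-- The play in which the input is made up of the blocks `adaptiveBlock pick S` and answered
by `F`. -/
def inducedPlay (S : ℕ → X) (n : ℕ) : I × O :=
  (flatWord (adaptiveBlock pick S) n, F (flatWord (adaptiveBlock pick S)) n)

variable {pick F}

theorem inducedPlay_congr {g : ℕ → ℕ} (hF : HasLookahead F g) (hne : ∀ s m, pick s m ≠ [])
    (hlong : ∀ s m, ∀ n < m, g n ≤ (pick s m).length) {S S' : ℕ → X} {i n : ℕ}
    (h : ∀ j < i + 1, S j = S' j) (hn : n < blockStart (adaptiveBlock pick S) i) :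
    inducedPlay pick F S n = inducedPlay pick F S' n := by
  have hα m (hm : m < blockStart (adaptiveBlock pick S) (i + 1)) :
      flatWord (adaptiveBlock pick S) m = flatWord (adaptiveBlock pick S') m :=
    flatWord_congr (fun j => hne _ _) (fun j => hne _ _) (fun j hj =>
      hasLookahead_adaptiveBlock pick j S S' fun l hl => h l (hl.trans_le hj)) hm
  have hg : g n ≤ blockStart (adaptiveBlock pick S) (i + 1) := by
    rw [blockStart_succ, adaptiveBlock, ← blockStart_adaptiveBlock]
    exact (hlong _ _ n hn).trans (Nat.le_add_left _ _)
  refine Prod.ext (hα n (hn.trans_le ?_)) (hF n _ _ fun m hm => hα m (hm.trans_le hg))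
  exact (blockStart_succ _ i).ge.trans' (Nat.le_add_right _ _)

end AdaptiveBlocks

namespace PACost

section AbstractGame

/-- The moves of Player I in the abstract game: the functions `rfun x` that represent the classes
of input words. -/
abbrev Profile (Q : Type) := Q → Set (Q × RType Q)

variable {Q I O : Type} (M : PACost Q (I × O))
  (σ : List (Profile Q × (Q × RType Q)) → Profile Q → Q × RType Q)

theorem gHist_congr {S S' : ℕ → Profile Q} {i : ℕ} (h : ∀ j < i + 1, S j = S' j) :
    M.gHist σ S i = M.gHist σ S' i := by
  induction i with
  | zero => simp only [gHist, h 0 Nat.one_pos]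
  | succ i ih => simp only [gHist, h (i + 1) (Nat.lt_succ_self _), ih fun j hj => h j (by omega)]

theorem hasLookahead_gQT : HasLookahead (M.gQT σ) (· + 1) := fun i S S' h => by
  rw [gQT, gQT, gHist_congr M σ h, h 0 i.succ_pos]

theorem map_fst_gHist (S : ℕ → Profile Q) (i : ℕ) :
    (M.gHist σ S i).map Prod.fst = (List.range (i + 1)).map S := by
  induction i with
  | zero => rfl
  | succ i ih => rw [List.range_succ, gHist, List.map_append, ih]; simp

theorem length_gHist (S : ℕ → Profile Q) (i : ℕ) : (M.gHist σ S i).length = i + 1 := by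
  simpa using congrArg List.length (map_fst_gHist M σ S i)

theorem gQT_succ (S : ℕ → Profile Q) (i : ℕ) :
    M.gQT σ S (i + 1) = σ (M.gHist σ S i) (S (i + 1)) := by
  simp [gQT, gHist]

theorem exists_gQT_eq {T : (ℕ → Profile Q) → ℕ → Q × RType Q}
    (hT : HasLookahead T (· + 1)) (hT0 : ∀ S, T S 0 = (M.qI, M.InitT M.qI)) :
    ∃ σ, M.gQT σ = T := by
  refine ⟨fun h s => T (fun j => (h.map Prod.fst ++ [s]).getD j s) h.length, ?_⟩
  funext S i
  cases i with
  | zero => exact (hT0 S).symm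
  | succ i =>
    rw [gQT_succ, length_gHist, map_fst_gHist]
    refine hT (i + 1) _ _ fun j hj => ?_
    have hrange : (List.range (i + 1)).map S ++ [S (i + 1)] = (List.range (i + 2)).map S := by
      rw [List.range_succ (n := i + 1), List.map_append, List.map_singleton]
    rw [hrange, List.getD_eq_getElem _ _ (by simpa [Nat.lt_succ_iff] using hj)]
    simp

theorem gWinsO_iff_exists_hasLookahead [Inhabited I] [Inhabited O] {d : ℕ}
    {rep : RType Q → Q × List (I × O)} :
    M.GWinsO d rep ↔ ∃ T : (ℕ → Profile Q) → ℕ → Q × RType Q,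
      HasLookahead T (· + 1) ∧ (∀ S, T S 0 = (M.qI, M.InitT M.qI)) ∧
      ∀ S, (∀ i, S i ∈ M.Rcls d) → (∀ i, T S (i + 1) ∈ S i (T S i).1) ∧
        M.Accepting (rep (T S 1).2).1 (flatWord fun j => (rep (T S (j + 1)).2).2) := by
  constructor
  · rintro ⟨σ, hσ⟩
    exact ⟨M.gQT σ, hasLookahead_gQT M σ, fun _ => rfl, hσ⟩
  · rintro ⟨T, hT, hT0, hwin⟩
    obtain ⟨σ, rfl⟩ := exists_gQT_eq M hT hT0
    exact ⟨σ, hwin⟩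

end AbstractGame

section GameToDelay

variable {Q I O : Type} (M : PACost Q (I × O))

/-- Some word over `O` that, combined with the input `x`, gives a run of `M` from `q` ending in the
state and having the type given by `s`; it is junk unless `s ∈ M.rfun x q`. -/
def outputWord [Nonempty O] (x : List I) (q : Q) (s : Q × RType Q) : List O :=
  Classical.epsilon fun y => y.length = x.length ∧
    s = ((x.zip y).foldl M.δ q, M.runType q (x.zip y))

theorem outputWord_spec [Nonempty I] [Nonempty O] {x : List I} {q : Q} {s : Q × RType Q}
    (hs : s ∈ M.rfun x q) :
    (M.outputWord x q s).length = x.length ∧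
      s = ((x.zip (M.outputWord x q s)).foldl M.δ q,
        M.runType q (x.zip (M.outputWord x q s))) :=
  Classical.epsilon_spec ((mem_rfun M).1 hs)

/-- The moves of Player I in the abstract game that correspond to cutting the input `α` into blocks
of length `D`. -/
def inputProfile (D : ℕ) (α : ℕ → I) (i : ℕ) : Profile Q :=
  M.rfun (seg α (D * i) (D * (i + 1)))

/-- The blocks of output letters by which Player O realizes, against the input `α`, the moves
prescribed by `T` in the abstract game. -/
def outputBlock [Nonempty O] (T : (ℕ → Profile Q) → ℕ → Q × RType Q) (D : ℕ) (α : ℕ → I) (i : ℕ) :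
    List O :=
  M.outputWord (seg α (D * i) (D * (i + 1))) (T (M.inputProfile D α) i).1
    (T (M.inputProfile D α) (i + 1))

theorem inputProfile_congr {D i : ℕ} {α α' : ℕ → I} (h : ∀ j < D * (i + 1), α j = α' j) :
    M.inputProfile D α i = M.inputProfile D α' i :=
  congrArg M.rfun (seg_congr fun j _ => h j)

theorem hasLookahead_outputBlock [Nonempty O] {T : (ℕ → Profile Q) → ℕ → Q × RType Q}
    (hT : HasLookahead T (· + 1)) (D : ℕ) :
    HasLookahead (M.outputBlock T D : (ℕ → I) → ℕ → List O) fun i => D * (i + 2) := by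
  intro i α α' h
  have hprofile j (hj : j < i + 2) : M.inputProfile D α j = M.inputProfile D α' j :=
    inputProfile_congr M fun l hl => h l (hl.trans_le (Nat.mul_le_mul_left D hj))
  have hseg : seg α (D * i) (D * (i + 1)) = seg α' (D * i) (D * (i + 1)) :=
    seg_congr fun j _ hj => h j (hj.trans_le (Nat.mul_le_mul_left D (Nat.le_succ _)))
  rw [outputBlock, outputBlock, hseg,
    hT i _ _ fun j hj => hprofile j (hj.trans i.succ.lt_succ_self), hT (i + 1) _ _ hprofile]

theorem GWinsO.exists_hasLookahead [Inhabited I] [Inhabited O] {d : ℕ} (hd : 0 < d)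
    {rep : RType Q → Q × List (I × O)} (hrep : M.Represents rep) (h : M.GWinsO d rep) :
    ∃ (F : (ℕ → I) → ℕ → O) (g : ℕ → ℕ),
      HasLookahead F g ∧ ∀ α, (fun n => (α n, F α n)) ∈ M.Lang := by
  obtain ⟨T, hT, hT0, hwin⟩ := (gWinsO_iff_exists_hasLookahead M).1 h
  set D := 2 * d
  have hD : StrictMono (D * ·) := fun a b hab => Nat.mul_lt_mul_of_pos_left hab (by omega)
  have hlen (α : ℕ → I) i : (seg α (D * i) (D * (i + 1))).length = D := by
    rw [length_seg, Nat.mul_succ, Nat.add_sub_cancel_left]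
  have hplay α := hwin (M.inputProfile D α) fun i => ⟨_, hlen α i, rfl⟩
  have hspec α i := outputWord_spec M ((hplay α).1 i)
  have hylen α i : (M.outputBlock T D α i).length = D := (hspec α i).1.trans (hlen α i)
  have hne α i : M.outputBlock T D α i ≠ [] := List.ne_nil_of_length_pos (by rw [hylen]; omega)
  have hstart α i : blockStart (M.outputBlock T D α) i = D * i := by
    simp [blockStart, hylen, Nat.mul_comm]
  refine ⟨fun α => flatWord (M.outputBlock T D α), _,
    hasLookahead_flatWord (hasLookahead_outputBlock M hT D)
      (hD.monotone.comp fun a b h => Nat.add_le_add_right h 2) hne, fun α => ?_⟩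
  set w : ℕ → I × O := fun n => (α n, flatWord (M.outputBlock T D α) n)
  have hseg i : seg w (D * i) (D * (i + 1)) =
      (seg α (D * i) (D * (i + 1))).zip (M.outputBlock T D α i) := by
    rw [← zip_seg, ← hstart α i, ← hstart α (i + 1), seg_flatWord (hne α)]
  have hmoves := eq_stateAt_blockType M (w := w) hD.monotone (mul_zero D)
    (s := T (M.inputProfile D α)) fun i => by
      simp only [hseg]
      exact (hspec α i).2
  have hacc := (hplay α).2
  simp only [hmoves, hT0] at hacc
  exact hrep.accepting_of_flatWord hD (fun i => (Nat.mul_succ D i).le) hacc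

end GameToDelay

section DelayToGame

variable {Q I O : Type} (M : PACost Q (I × O))

/-- The moves of Player O in the abstract game that follow the run of `M` on the play
`inducedPlay pick F S`. -/
def inducedMoves [Inhabited I] (pick : Profile Q → ℕ → List I) (F : (ℕ → I) → ℕ → O)
    (S : ℕ → Profile Q) : ℕ → Q × RType Q
  | 0 => (M.qI, M.InitT M.qI)
  | i + 1 => (M.stateAt M.qI (inducedPlay pick F S) (blockStart (adaptiveBlock pick S) (i + 1)),
      M.blockType M.qI (inducedPlay pick F S) (blockStart (adaptiveBlock pick S)) i)

variable [Inhabited I] {pick : Profile Q → ℕ → List I} {F : (ℕ → I) → ℕ → O} {g : ℕ → ℕ}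

theorem hasLookahead_inducedMoves (hF : HasLookahead F g) (hne : ∀ r m, pick r m ≠ [])
    (hlong : ∀ r m, ∀ n < m, g n ≤ (pick r m).length) :
    HasLookahead (M.inducedMoves pick F) (· + 1) := by
  intro i S S' h
  cases i with
  | zero => rfl
  | succ i =>
    have hblock j : adaptiveBlock pick S j ≠ [] := hne _ _
    have hstart m (hm : m ≤ i + 1) :
        blockStart (adaptiveBlock pick S) m = blockStart (adaptiveBlock pick S') m := by
      rw [blockStart_adaptiveBlock, blockStart_adaptiveBlock]
      exact hasLookahead_adaptiveStart pick m S S' fun j hj =>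
        h j (hj.trans_le (hm.trans i.succ.le_succ))
    have hplay n (hn : n < blockStart (adaptiveBlock pick S) (i + 1)) :=
      inducedPlay_congr hF hne hlong h hn
    rw [inducedMoves, inducedMoves, ← hstart (i + 1) le_rfl, stateAt_congr M _ hplay,
      blockType_congr M ((blockStart_strictMono hblock).monotone i.le_succ)
        (hstart i i.le_succ) (hstart (i + 1) le_rfl) hplay]

theorem inducedMoves_succ_mem_rfun [Nonempty O] (hne : ∀ r m, pick r m ≠ []) (S : ℕ → Profile Q)
    (i : ℕ) :
    M.inducedMoves pick F S (i + 1) ∈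
      M.rfun (adaptiveBlock pick S i) (M.inducedMoves pick F S i).1 := by
  have hblock j : adaptiveBlock pick S j ≠ [] := hne _ _
  have hmem := blockType_mem_rfun M M.qI (inducedPlay pick F S)
    (blockStart_strictMono hblock).monotone i
  have hinput : (fun n => (inducedPlay pick F S n).1) = flatWord (adaptiveBlock pick S) := rfl
  rw [hinput, seg_flatWord hblock] at hmem
  cases i <;> exact hmem

theorem gWinsO_of_hasLookahead [Fintype Q] [Inhabited O] {d : ℕ}
    (hd : 2 ^ M.typeFinset.card ≤ 2 * d) {rep : RType Q → Q × List (I × O)}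
    (hrep : M.Represents rep) (hF : HasLookahead F g)
    (hL : ∀ α, (fun n => (α n, F α n)) ∈ M.Lang) : M.GWinsO d rep := by
  have hpick (r : Profile Q) (m : ℕ) : ∃ x : List I,
      1 + (Finset.range m).sup g ≤ x.length ∧ (r ∈ M.Rcls d → M.rfun x = r) := by
    by_cases hr : r ∈ M.Rcls d
    · obtain ⟨x, hx, hxr⟩ :=
        exists_le_length_rfun_eq_of_mem_Rcls M hd hr (1 + (Finset.range m).sup g)
      exact ⟨x, hx, fun _ => hxr⟩
    · exact ⟨List.replicate _ default, (List.length_replicate ..).ge, fun h => absurd h hr⟩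
  choose pick hlen hrfun using hpick
  have hne r m : pick r m ≠ [] := List.ne_nil_of_length_pos (by have := hlen r m; omega)
  have hlong r m n (hn : n < m) : g n ≤ (pick r m).length := by
    have := Finset.le_sup (f := g) (Finset.mem_range.2 hn)
    have := hlen r m
    omega
  refine (gWinsO_iff_exists_hasLookahead M).2 ⟨M.inducedMoves pick F,
    hasLookahead_inducedMoves M hF hne hlong, fun _ => rfl, fun S hS => ⟨fun i => ?_, ?_⟩⟩
  · rw [← hrfun (S i) (adaptiveStart pick S i) (hS i)]
    exact inducedMoves_succ_mem_rfun M hne S i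
  · exact hrep.accepting_flatWord (blockStart_strictMono fun j => hne _ _)
      (hL (flatWord (adaptiveBlock pick S)))

end DelayToGame

end PACost

theorem statement8_general {Q I O : Type} [Fintype Q] [Inhabited I] [Inhabited O]
    (M : PACost Q (I × O)) {d : ℕ}
    (hd : 2 ^ (2 * Fintype.card Q ^ 2 * (Finset.univ.image M.Ω).card ^ 2) ≤ 2 * d)
    (rep : PACost.RType Q → Q × List (I × O)) (hrep : M.Represents rep) :
    M.GWinsO d rep ↔ ∃ f : ℕ → ℕ, DelayFn f ∧ OWins f M.Lang := by
  have htypes : 2 ^ M.typeFinset.card ≤ 2 * d :=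
    (Nat.pow_le_pow_right two_pos (PACost.card_typeFinset_le M)).trans hd
  have hpos : 0 < 2 ^ M.typeFinset.card := by positivity
  constructor
  · intro h
    obtain ⟨F, g, hF, hL⟩ := PACost.GWinsO.exists_hasLookahead M (by omega) hrep h
    exact hF.exists_OWins hL
  · rintro ⟨f, hf, h⟩
    obtain ⟨F, g, hF, hL⟩ := h.exists_hasLookahead hf
    exact PACost.gWinsO_of_hasLookahead M htypes hrep hF hL

/-- Lemma 2, equivalence of the abstract game and the delay game.
With `d = 2^(2n⁴k²)` and fixed representative runs `rep t` for all realized types `t`,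
Player O wins the abstract game `𝒢(A)` iff she wins the delay game `Γ_f(L(A))` for some
delay function `f`. -/
theorem statement8 {Q I O : Type} [Fintype Q] [Fintype I] [Fintype O]
    [Inhabited I] [Inhabited O]
    (M : PACost Q (I × O)) (n k : ℕ)
    (hn : Fintype.card Q = n) (hk : (Finset.univ.image M.Ω).card = k)
    (he : ∃ q, Even (M.Ω q)) (ho : ∃ q, Odd (M.Ω q))
    (rep : PACost.RType Q → Q × List (I × O))
    (hrep : ∀ t : PACost.RType Q,
      (∃ (q : Q) (l : List (I × O)), l ≠ [] ∧ M.runType q l = t) →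
      (rep t).2 ≠ [] ∧ M.runType (rep t).1 (rep t).2 = t) :
    M.GWinsO (2 ^ (2 * n ^ 4 * k ^ 2)) rep ↔
      ∃ f : ℕ → ℕ, DelayFn f ∧ OWins f M.Lang := by
  subst hn hk
  have hcard : 0 < Fintype.card Q := Fintype.card_pos_iff.2 ⟨M.qI⟩
  refine statement8_general M ?_ rep hrep
  rw [Nat.mul_assoc, Nat.mul_assoc]
  exact (Nat.pow_le_pow_right two_pos (Nat.mul_le_mul_left 2 (Nat.mul_le_mul_right _
    (Nat.pow_le_pow_right hcard (by norm_num))))).trans (Nat.le_mul_of_pos_left _ two_pos)
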